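/- Let K be either the variety of monoids or the variety of commutative monoids. For every unary implicit operation f of K defined by a primitive positive formula there exist l, r ∈ ℕ such that a^l · f^A(a) = a^r for all A ∈ K and all a ∈ dom(f^A). -/

import Mathlib

namespace Impl

open FirstOrder Language

universe u v

/-- A bundled algebra (first-order structure) for the language `L`. -/
structure Alg (L : FirstOrder.Language.{u, u}) : Type (u + 1) where
  carrier : Type u
  [str : L.Structure carrier]

attribute [instance] Alg.str

variable {L : FirstOrder.Language.{u, u}}

/-- The direct product of a family of algebras. -/
def Alg.pi {ι : Type u} (A : ι → Alg L) : Alg L where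
  carrier := ∀ i, (A i).carrier
  str :=
    { funMap := fun {k} f v i => Structure.funMap f fun j => v j i
      RelMap := fun {k} r v => ∀ i, Structure.RelMap r fun j => v j i }

/-- The binary direct product of two algebras. -/
def Alg.prod (A B : Alg L) : Alg L where
  carrier := A.carrier × B.carrier
  str :=
    { funMap := fun {k} f v =>
        (Structure.funMap f fun j => (v j).1, Structure.funMap f fun j => (v j).2)
      RelMap := fun {k} r v =>
        Structure.RelMap r (fun j => (v j).1) ∧ Structure.RelMap r fun j => (v j).2 }

/-- The ultraproduct of a family of algebras with respect to an ultrafilter. -/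
def Alg.uprod {ι : Type u} (F : Ultrafilter ι) (A : ι → Alg L) : Alg L where
  carrier := Filter.Product (F : Filter ι) fun i => (A i).carrier
  str := inferInstance

/-- Closure under isomorphic copies. -/
def ClosedUnderIso (K : Set (Alg L)) : Prop :=
  ∀ A B : Alg L, A ∈ K → Nonempty (A.carrier ≃[L] B.carrier) → B ∈ K

/-- Closure under subalgebras (up to the identification of a subalgebra with an embedding). -/
def ClosedUnderSub (K : Set (Alg L)) : Prop :=
  ∀ A B : Alg L, B ∈ K → Nonempty (A.carrier ↪[L] B.carrier) → A ∈ K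

/-- Closure under direct products. -/
def ClosedUnderProd (K : Set (Alg L)) : Prop :=
  ∀ (ι : Type u) (A : ι → Alg L), (∀ i, A i ∈ K) → Alg.pi A ∈ K

/-- Closure under finite direct products. -/
def ClosedUnderFinProd (K : Set (Alg L)) : Prop :=
  ∀ (ι : Type u), Finite ι → ∀ A : ι → Alg L, (∀ i, A i ∈ K) → Alg.pi A ∈ K

/-- Closure under homomorphic images. -/
def ClosedUnderHomImg (K : Set (Alg L)) : Prop :=
  ∀ A B : Alg L, A ∈ K → ∀ h : A.carrier →[L] B.carrier, Function.Surjective h → B ∈ K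

/-- Closure under ultraproducts. -/
def ClosedUnderUprod (K : Set (Alg L)) : Prop :=
  ∀ (ι : Type u) (F : Ultrafilter ι) (A : ι → Alg L), (∀ i, A i ∈ K) → Alg.uprod F A ∈ K

/-- A universal class: a class closed under isomorphic copies, subalgebras and ultraproducts. -/
def IsUniversalClass (K : Set (Alg L)) : Prop :=
  ClosedUnderIso K ∧ ClosedUnderSub K ∧ ClosedUnderUprod K

/-- A quasivariety: a class closed under isomorphic copies, subalgebras, direct products and
ultraproducts. -/
def IsQuasivariety (K : Set (Alg L)) : Prop :=
  ClosedUnderIso K ∧ ClosedUnderSub K ∧ ClosedUnderProd K ∧ ClosedUnderUprod K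

/-- A variety: a class closed under homomorphic images, subalgebras and direct products. -/
def IsVariety (K : Set (Alg L)) : Prop :=
  ClosedUnderHomImg K ∧ ClosedUnderSub K ∧ ClosedUnderProd K

/-- The least quasivariety containing `K`. -/
def QGen (K : Set (Alg L)) : Set (Alg L) :=
  ⋂₀ { M : Set (Alg L) | IsQuasivariety M ∧ K ⊆ M }

/-- The least variety containing `K`. -/
def VGen (K : Set (Alg L)) : Set (Alg L) :=
  ⋂₀ { M : Set (Alg L) | IsVariety M ∧ K ⊆ M }

/-- An elementary class: the class of all models of some first-order theory. -/
def IsElementary (K : Set (Alg L)) : Prop :=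
  ∃ T : L.Theory, ∀ A : Alg L, A ∈ K ↔ ∀ φ ∈ T, A.carrier ⊨ φ

/-- Finite conjunctions of equations (with `⊤` as the empty conjunction). -/
inductive IsConjEq {α : Type v} : ∀ {k : ℕ}, L.BoundedFormula α k → Prop
  | top {k} : IsConjEq (⊤ : L.BoundedFormula α k)
  | equal {k} (t₁ t₂ : L.Term (α ⊕ Fin k)) : IsConjEq (BoundedFormula.equal t₁ t₂)
  | inf {k} {φ ψ : L.BoundedFormula α k} : IsConjEq φ → IsConjEq ψ → IsConjEq (φ ⊓ ψ)

/-- Positive quantifier-free formulas: built from equations, `⊤` and `⊥` using `⊓` and `⊔`. -/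
inductive IsPosQF {α : Type v} : ∀ {k : ℕ}, L.BoundedFormula α k → Prop
  | falsum {k} : IsPosQF (⊥ : L.BoundedFormula α k)
  | top {k} : IsPosQF (⊤ : L.BoundedFormula α k)
  | equal {k} (t₁ t₂ : L.Term (α ⊕ Fin k)) : IsPosQF (BoundedFormula.equal t₁ t₂)
  | inf {k} {φ ψ : L.BoundedFormula α k} : IsPosQF φ → IsPosQF ψ → IsPosQF (φ ⊓ ψ)
  | sup {k} {φ ψ : L.BoundedFormula α k} : IsPosQF φ → IsPosQF ψ → IsPosQF (φ ⊔ ψ)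

/-- Primitive positive (pp) formulas: existentially quantified finite conjunctions of
equations. -/
inductive IsPP {α : Type v} : ∀ {k : ℕ}, L.BoundedFormula α k → Prop
  | of_conjEq {k} {φ : L.BoundedFormula α k} : IsConjEq φ → IsPP φ
  | ex {k} {φ : L.BoundedFormula α (k + 1)} : IsPP φ → IsPP φ.ex

/-- Existential positive formulas: existentially quantified positive quantifier-free
formulas. -/
inductive IsExistPos {α : Type v} : ∀ {k : ℕ}, L.BoundedFormula α k → Prop
  | of_posQF {k} {φ : L.BoundedFormula α k} : IsPosQF φ → IsExistPos φ
  | ex {k} {φ : L.BoundedFormula α (k + 1)} : IsExistPos φ → IsExistPos φ.ex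

/-- Two formulas are equivalent in a class of algebras. -/
def EquivOn (K : Set (Alg L)) {α : Type v} (φ ψ : L.Formula α) : Prop :=
  ∀ A : Alg L, A ∈ K → ∀ x : α → A.carrier, φ.Realize x ↔ ψ.Realize x

/-- A formula is preserved by homomorphisms in `K`. -/
def PreservedByHomsOn (K : Set (Alg L)) {α : Type v} (φ : L.Formula α) : Prop :=
  ∀ A B : Alg L, A ∈ K → B ∈ K → ∀ (h : A.carrier →[L] B.carrier) (x : α → A.carrier),
    φ.Realize x → φ.Realize fun a => h (x a)

/-- A formula is preserved by direct products in `K`. -/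
def PreservedByProdsOn (K : Set (Alg L)) {α : Type v} (φ : L.Formula α) : Prop :=
  ∀ (ι : Type u) (A : ι → Alg L), (∀ i, A i ∈ K) → ∀ x : α → (Alg.pi A).carrier,
    (∀ i, φ.Realize fun a => x a i) → φ.Realize x

/-- An `n`-ary partial function on a class of algebras `K`: a family assigning to each member of
`K` an `n`-ary partial function on its carrier. -/
def PartialFunOn (K : Set (Alg L)) (n : ℕ) :=
  ∀ (A : Alg L), A ∈ K → ((Fin n → A.carrier) →. A.carrier)

/-- A partial function on `K` is defined by the formula `φ(x₁, …, xₙ, y)` (the last variable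
being the output) when its graph on each member of `K` is the solution set of `φ`. -/
def DefinedBy {K : Set (Alg L)} {n : ℕ} (f : PartialFunOn K n)
    (φ : L.Formula (Fin (n + 1))) : Prop :=
  ∀ (A : Alg L) (hA : A ∈ K) (x : Fin n → A.carrier) (b : A.carrier),
    b ∈ f A hA x ↔ φ.Realize (Fin.snoc x b)

/-- The formula `φ(x₁, …, xₙ, y)` is functional in `K`: for all inputs there is at most one
output satisfying it. -/
def FunctionalIn (K : Set (Alg L)) {n : ℕ} (φ : L.Formula (Fin (n + 1))) : Prop :=
  ∀ A : Alg L, A ∈ K → ∀ (x : Fin n → A.carrier) (b₁ b₂ : A.carrier),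
    φ.Realize (Fin.snoc x b₁) → φ.Realize (Fin.snoc x b₂) → b₁ = b₂

/-- A partial function on `K` is an operation of `K` when it is preserved by all homomorphisms
between members of `K`. -/
def IsOperationOn {K : Set (Alg L)} {n : ℕ} (f : PartialFunOn K n) : Prop :=
  ∀ (A B : Alg L) (hA : A ∈ K) (hB : B ∈ K) (h : A.carrier →[L] B.carrier)
    (x : Fin n → A.carrier) (b : A.carrier),
    b ∈ f A hA x → h b ∈ f B hB fun i => h (x i)

/-- A partial function on `K` is implicit when it is defined by some formula. -/
def IsImplicit {K : Set (Alg L)} {n : ℕ} (f : PartialFunOn K n) : Prop :=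
  ∃ φ : L.Formula (Fin (n + 1)), DefinedBy f φ

/-- An implicit operation of `K`: a partial function that is both implicit and an operation. -/
def IsImplicitOp {K : Set (Alg L)} {n : ℕ} (f : PartialFunOn K n) : Prop :=
  IsImplicit f ∧ IsOperationOn f

/-- An implicit operation is extendable when every tuple in every member of `K` lies in the
domain of the operation in some extension inside `K`. -/
def Extendable {K : Set (Alg L)} {n : ℕ} (f : PartialFunOn K n) : Prop :=
  ∀ (A : Alg L) (hA : A ∈ K) (x : Fin n → A.carrier),
    ∃ (B : Alg L) (hB : B ∈ K) (e : A.carrier ↪[L] B.carrier),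
      (f B hB fun i => e (x i)).Dom

/-- The dominion of a subset `s` of `M` relative to the class `K`. -/
def dominion (K : Set (Alg L)) (M : Type u) [L.Structure M] (s : Set M) : Set M :=
  { b | ∀ C : Alg L, C ∈ K → ∀ g h : M →[L] C.carrier, (∀ a ∈ s, g a = h a) → g b = h b }

/-- The strong epimorphism surjectivity property. -/
def StrongES (K : Set (Alg L)) : Prop :=
  ∀ (A B : Alg L), A ∈ K → B ∈ K → ∀ (f : A.carrier →[L] B.carrier) (b : B.carrier),
    b ∉ Set.range f →
      ∃ C : Alg L, C ∈ K ∧ ∃ g h : B.carrier →[L] C.carrier,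
        (∀ a : A.carrier, g (f a) = h (f a)) ∧ g b ≠ h b

/-- The weak epimorphism surjectivity property: every `K`-epimorphism between finitely
generated members of `K` is surjective. -/
def WeakES (K : Set (Alg L)) : Prop :=
  ∀ (A B : Alg L), A ∈ K → B ∈ K →
    Structure.FG L A.carrier → Structure.FG L B.carrier →
      ∀ f : A.carrier →[L] B.carrier,
        (∀ C : Alg L, C ∈ K → ∀ g h : B.carrier →[L] C.carrier,
          (∀ a : A.carrier, g (f a) = h (f a)) → g = h) →
        Function.Surjective f

/-- The amalgamation property. -/
def HasAmalgamation (K : Set (Alg L)) : Prop :=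
  ∀ (A B C : Alg L), A ∈ K → B ∈ K → C ∈ K →
    ∀ (f : A.carrier ↪[L] B.carrier) (g : A.carrier ↪[L] C.carrier),
      ∃ D : Alg L, D ∈ K ∧ ∃ (f' : B.carrier ↪[L] D.carrier) (g' : C.carrier ↪[L] D.carrier),
        ∀ a : A.carrier, f' (f a) = g' (g a)

/-- A finitely presented member of `K`: an algebra in `K` with a finite presentation, phrased
through the usual universal property of `T(X)/Cg_K(Y)`. -/
def FinitelyPresentedIn (K : Set (Alg L)) (B : Alg L) : Prop :=
  B ∈ K ∧ ∃ (m : ℕ) (Y : Finset (L.Term (Fin m) × L.Term (Fin m))) (b : Fin m → B.carrier),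
    Substructure.closure L (Set.range b) = ⊤ ∧
    (∀ p ∈ Y, p.1.realize b = p.2.realize b) ∧
    ∀ C : Alg L, C ∈ K → ∀ x : Fin m → C.carrier,
      (∀ p ∈ Y, p.1.realize x = p.2.realize x) →
        ∃ g : B.carrier →[L] C.carrier, ∀ i, g (b i) = x i

/-- Subdirectly irreducible relative to `K`. -/
def IsRSI (K : Set (Alg L)) (A : Alg L) : Prop :=
  A ∈ K ∧ ∀ (ι : Type u) (B : ι → Alg L), (∀ i, B i ∈ K) →
    ∀ h : A.carrier ↪[L] (Alg.pi B).carrier,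
      (∀ i, Function.Surjective fun a => h a i) →
        ∃ i, Function.Bijective fun a => h a i

/-- Finitely subdirectly irreducible relative to `K`. -/
def IsRFSI (K : Set (Alg L)) (A : Alg L) : Prop :=
  A ∈ K ∧ ∀ (ι : Type u), Finite ι → ∀ B : ι → Alg L, (∀ i, B i ∈ K) →
    ∀ h : A.carrier ↪[L] (Alg.pi B).carrier,
      (∀ i, Function.Surjective fun a => h a i) →
        ∃ i, Function.Bijective fun a => h a i

/-- A congruence on an algebra: an equivalence relation compatible with all the operations. -/
def IsCongruenceOn (A : Alg L) (θ : A.carrier → A.carrier → Prop) : Prop :=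
  Equivalence θ ∧
    ∀ (k : ℕ) (f : L.Functions k) (x y : Fin k → A.carrier),
      (∀ i, θ (x i) (y i)) → θ (Structure.funMap f x) (Structure.funMap f y)

/-- The quotient of an algebra by (the setoid of) an equivalence relation; when the relation is
a congruence this is the quotient algebra. -/
noncomputable def Alg.quot (A : Alg L) (θ : A.carrier → A.carrier → Prop) (h : Equivalence θ) :
    Alg L where
  carrier := Quotient (⟨θ, h⟩ : Setoid A.carrier)
  str :=
    { funMap := fun {k} f v => Quotient.mk _ (Structure.funMap f fun i => (v i).out)
      RelMap := fun {k} r v => Structure.RelMap r fun i => (v i).out }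

/-- A `K`-congruence of `A`: a congruence whose quotient lies in `K`. -/
def IsRelCong (K : Set (Alg L)) (A : Alg L) (θ : A.carrier → A.carrier → Prop) : Prop :=
  ∃ h : IsCongruenceOn A θ, Alg.quot A θ h.1 ∈ K

/-- The join of two relations in the lattice of `K`-congruences of `A`. -/
def relCongJoin (K : Set (Alg L)) (A : Alg L)
    (θ φ : A.carrier → A.carrier → Prop) (x y : A.carrier) : Prop :=
  ∀ ρ : A.carrier → A.carrier → Prop, IsRelCong K A ρ →
    (∀ a b, θ a b → ρ a b) → (∀ a b, φ a b → ρ a b) → ρ x y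

/-- Relative congruence distributivity: the lattice of `K`-congruences of each member of `K`
is distributive. -/
def RelCongDistributive (K : Set (Alg L)) : Prop :=
  ∀ A : Alg L, A ∈ K → ∀ θ φ ψ : A.carrier → A.carrier → Prop,
    IsRelCong K A θ → IsRelCong K A φ → IsRelCong K A ψ →
      ∀ x y : A.carrier,
        (θ x y ∧ relCongJoin K A φ ψ x y) ↔
          relCongJoin K A (fun a b => θ a b ∧ φ a b) (fun a b => θ a b ∧ ψ a b) x y

/-- The join of two relations in the lattice of congruences of `A`. -/
def congJoin (A : Alg L) (θ φ : A.carrier → A.carrier → Prop) (x y : A.carrier) : Prop :=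
  ∀ ρ : A.carrier → A.carrier → Prop, IsCongruenceOn A ρ →
    (∀ a b, θ a b → ρ a b) → (∀ a b, φ a b → ρ a b) → ρ x y

/-- Congruence permutability for all members of a class. -/
def CongPermutableClass (K : Set (Alg L)) : Prop :=
  ∀ A : Alg L, A ∈ K → ∀ θ φ : A.carrier → A.carrier → Prop,
    IsCongruenceOn A θ → IsCongruenceOn A φ →
      ∀ x y : A.carrier, (∃ z, θ x z ∧ φ z y) ↔ ∃ z, φ x z ∧ θ z y

/-- Congruence distributivity for all members of a class. -/
def CongDistributiveClass (K : Set (Alg L)) : Prop :=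
  ∀ A : Alg L, A ∈ K → ∀ θ φ ψ : A.carrier → A.carrier → Prop,
    IsCongruenceOn A θ → IsCongruenceOn A φ → IsCongruenceOn A ψ →
      ∀ x y : A.carrier,
        (θ x y ∧ congJoin A φ ψ x y) ↔
          congJoin A (fun a b => θ a b ∧ φ a b) (fun a b => θ a b ∧ ψ a b) x y

/-- The congruence extension property. -/
def HasCEP (K : Set (Alg L)) : Prop :=
  ∀ A B : Alg L, A ∈ K → B ∈ K → ∀ e : A.carrier ↪[L] B.carrier,
    ∀ θ : A.carrier → A.carrier → Prop, IsCongruenceOn A θ →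
      ∃ ρ : B.carrier → B.carrier → Prop, IsCongruenceOn B ρ ∧
        ∀ x y : A.carrier, θ x y ↔ ρ (e x) (e y)

/-- The language consisting of one new function symbol `gᵢ` of arity `ar i` for each `i`. -/
def newLang {ι : Type u} (ar : ι → ℕ) : FirstOrder.Language.{u, u} where
  Functions := fun n => { i : ι // ar i = n }
  Relations := fun _ => PEmpty

/-- The `L`-reduct of an algebra in an expanded language `L.sum N`. -/
def algReduct {N : FirstOrder.Language.{u, u}} (B : Alg (L.sum N)) : Alg L where
  carrier := B.carrier
  str := (LHom.sumInl : L →ᴸ L.sum N).reduct B.carrier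

/-- The class `K[L_F]` of expansions of members of `K` on which each operation in the family
`f` is total, interpreting the new symbol `gᵢ` as `f i`. -/
def expClass (K : Set (Alg L)) {ι : Type u} (ar : ι → ℕ)
    (f : ∀ i, PartialFunOn K (ar i)) : Set (Alg (L.sum (newLang ar))) :=
  { B | ∃ hB : algReduct B ∈ K,
      ∀ (i : ι) (x : Fin (ar i) → B.carrier),
        Structure.funMap (L := L.sum (newLang ar)) (M := B.carrier)
            (Sum.inr ⟨i, rfl⟩ : (L.sum (newLang ar)).Functions (ar i)) x
          ∈ f i (algReduct B) hB x }

/-- Closure under subalgebras (and isomorphic copies) inside a fixed language. -/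
def SClosure {L' : FirstOrder.Language.{u, u}} (S : Set (Alg L')) : Set (Alg L') :=
  { A | ∃ B ∈ S, Nonempty (A.carrier ↪[L'] B.carrier) }

/-- Membership in `ext_pp(K)`: an extendable implicit operation defined by a pp formula. -/
def InExtPP {K : Set (Alg L)} {n : ℕ} (f : PartialFunOn K n) : Prop :=
  IsOperationOn f ∧ (∃ φ : L.Formula (Fin (n + 1)), IsPP φ ∧ DefinedBy f φ) ∧ Extendable f

/-- `M` is the pp expansion of `K` induced by the family `f` of extendable pp-definable
implicit operations, with one new symbol of arity `ar i` for each `i`. -/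
def IsPPExpansionVia (K : Set (Alg L)) {ι : Type u} (ar : ι → ℕ)
    (f : ∀ i, PartialFunOn K (ar i)) (M : Set (Alg (L.sum (newLang ar)))) : Prop :=
  (∀ i, 0 < ar i) ∧ (∀ i, InExtPP (f i)) ∧ M = SClosure (expClass K ar f)

/-- Every implicit operation of `K` is interpolated in `M` by a set of terms of the expanded
language. -/
def InterpolatesByTermsInExp (K : Set (Alg L)) {ι : Type u} {ar : ι → ℕ}
    (M : Set (Alg (L.sum (newLang ar)))) : Prop :=
  ∀ n : ℕ, 0 < n → ∀ g : PartialFunOn K n, IsImplicitOp g →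
    ∃ T : Set ((L.sum (newLang ar)).Term (Fin n)),
      ∀ A : Alg (L.sum (newLang ar)), A ∈ M →
        ∀ (hA : algReduct A ∈ K) (x : Fin n → A.carrier) (b : A.carrier),
          b ∈ g (algReduct A) hA x → ∃ t ∈ T, t.realize x = b

/-- `M` is a Beth companion of `K` (via the given expansion datum). -/
def IsBethCompanionVia (K : Set (Alg L)) {ι : Type u} (ar : ι → ℕ)
    (f : ∀ i, PartialFunOn K (ar i)) (M : Set (Alg (L.sum (newLang ar)))) : Prop :=
  IsPPExpansionVia K ar f M ∧ InterpolatesByTermsInExp K M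

/-- A pp expansion is congruence preserving when the `M`-congruences of each member of `M`
coincide with the `K`-congruences of its `L`-reduct. -/
def CongPreserving {N : FirstOrder.Language.{u, u}} (K : Set (Alg L))
    (M : Set (Alg (L.sum N))) : Prop :=
  ∀ A : Alg (L.sum N), A ∈ M → ∀ θ : A.carrier → A.carrier → Prop,
    IsRelCong M A θ ↔ IsRelCong K (algReduct A) θ

/-- Reinterpretation of an `L₁`-algebra as an `L₂`-algebra along a map sending `L₂`-symbols to
`L₁`-terms (both languages are assumed to be purely functional). -/
def reinterpret {L₁ L₂ : FirstOrder.Language.{u, u}} (ρ : ∀ n, L₂.Functions n → L₁.Term (Fin n))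
    (A : Alg L₁) : Alg L₂ where
  carrier := A.carrier
  str :=
    { funMap := fun {k} s x => (ρ k s).realize x
      RelMap := fun {k} _ _ => False }

/-- Two expansions of the same base language `L` are faithfully term equivalent relative to
`L`. -/
def FaithfullyTermEquivRel (L : FirstOrder.Language.{u, u}) {N₁ N₂ : FirstOrder.Language.{u, u}}
    (M₁ : Set (Alg (L.sum N₁))) (M₂ : Set (Alg (L.sum N₂))) : Prop :=
  ∃ (τ : ∀ n, (L.sum N₁).Functions n → (L.sum N₂).Term (Fin n))
    (ρ : ∀ n, (L.sum N₂).Functions n → (L.sum N₁).Term (Fin n)),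
    (∀ (n : ℕ) (s : L.Functions n),
      τ n (Sum.inl s) = Term.func (Sum.inl s : (L.sum N₂).Functions n) Term.var) ∧
    (∀ (n : ℕ) (s : L.Functions n),
      ρ n (Sum.inl s) = Term.func (Sum.inl s : (L.sum N₁).Functions n) Term.var) ∧
    (∀ A : Alg (L.sum N₁), A ∈ M₁ → reinterpret ρ A ∈ M₂) ∧
    (∀ B : Alg (L.sum N₂), B ∈ M₂ → reinterpret τ B ∈ M₁) ∧
    (∀ A : Alg (L.sum N₁), A ∈ M₁ → reinterpret τ (reinterpret ρ A) = A) ∧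
    (∀ B : Alg (L.sum N₂), B ∈ M₂ → reinterpret ρ (reinterpret τ B) = B)

/-- The language of monoids: one binary operation and one constant. -/
def Lmon : FirstOrder.Language.{0, 0} where
  Functions := fun n => match n with
    | 0 => PUnit
    | 2 => PUnit
    | _ => PEmpty
  Relations := fun _ => PEmpty

instance : Lmon.IsAlgebraic := fun _ => inferInstanceAs (IsEmpty PEmpty)

/-- The multiplication symbol. -/
def mulSym : Lmon.Functions 2 := PUnit.unit

/-- The unit symbol. -/
def oneSym : Lmon.Functions 0 := PUnit.unit

/-- The interpretation of the multiplication symbol. -/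
def mmul {M : Type} [Lmon.Structure M] (a b : M) : M :=
  Structure.funMap (L := Lmon) mulSym ![a, b]

/-- The interpretation of the unit symbol. -/
def mone {M : Type} [Lmon.Structure M] : M :=
  Structure.funMap (L := Lmon) oneSym ![]

/-- Powers in an `Lmon`-structure (`mpow a n = aⁿ`, with `mpow a 0 = 1`). -/
def mpow {M : Type} [Lmon.Structure M] (a : M) : ℕ → M
  | 0 => mone
  | k + 1 => mmul (mpow a k) a

/-- The variety of monoids, as a class of `Lmon`-algebras. -/
def MonCl : Set (Alg Lmon) :=
  { A | (∀ a b c : A.carrier, mmul (mmul a b) c = mmul a (mmul b c)) ∧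
        (∀ a : A.carrier, mmul a mone = a) ∧ ∀ a : A.carrier, mmul mone a = a }

/-- The variety of commutative monoids, as a class of `Lmon`-algebras. -/
def CommMonCl : Set (Alg Lmon) :=
  { A | A ∈ MonCl ∧ ∀ a b : A.carrier, mmul a b = mmul b a }

/-! ### Auxiliary material for the proof -/

/-- The `Lmon`-structure of a monoid. -/
def strOfMonoid (M : Type) [Monoid M] : Lmon.Structure M where
  funMap := fun {n} f v => match n, f, v with
    | 0, _, _ => 1
    | 2, _, v => v 0 * v 1
    | 1, f, _ => PEmpty.elim f
    | (_ + 3), f, _ => PEmpty.elim f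
  RelMap := fun {_} r _ => PEmpty.elim r

/-- The `Lmon`-algebra of a monoid. -/
def algOfMonoid (M : Type) [Monoid M] : Alg Lmon where
  carrier := M
  str := strOfMonoid M

theorem algOfMonoid_mem (M : Type) [Monoid M] : algOfMonoid M ∈ MonCl :=
  ⟨fun a b c => mul_assoc (G := M) a b c, fun a => mul_one (M := M) a,
    fun a => one_mul (M := M) a⟩

theorem algOfMonoid_mem_comm (M : Type) [CommMonoid M] : algOfMonoid M ∈ CommMonCl :=
  ⟨algOfMonoid_mem M, fun a b => mul_comm (G := M) a b⟩

/-- The monoid of a member of `MonCl`. -/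
@[reducible] def monoidOf (A : Alg Lmon) (hA : A ∈ MonCl) : Monoid A.carrier where
  mul := mmul
  one := mone
  mul_assoc := hA.1
  mul_one := hA.2.1
  one_mul := hA.2.2

/-- The commutative monoid of a member of `CommMonCl`. -/
@[reducible] def commMonoidOf (A : Alg Lmon) (hA : A ∈ CommMonCl) : CommMonoid A.carrier :=
  { monoidOf A hA.1 with mul_comm := hA.2 }

theorem mpow_eq (A : Alg Lmon) (hA : A ∈ MonCl) (a : A.carrier) (k : ℕ) :
    mpow a k = (monoidOf A hA).npow k a := by
  letI := monoidOf A hA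
  change mpow a k = a ^ k
  induction k with
  | zero => rw [pow_zero]; rfl
  | succ k ih => rw [pow_succ, ← ih]; rfl

/-- A map preserving multiplication and unit is a homomorphism of `Lmon`-structures. -/
def homOf {A B : Type} [Lmon.Structure A] [Lmon.Structure B] (g : A → B)
    (h1 : g mone = mone) (hm : ∀ a b, g (mmul a b) = mmul (g a) (g b)) : A →[Lmon] B where
  toFun := g
  map_fun' := fun {n} f x => match n, f, x with
    | 0, f, x => by
        have e1 : x = ![] := Subsingleton.elim _ _
        have e2 : g ∘ x = ![] := Subsingleton.elim _ _
        rw [e2, e1]; exact h1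
    | 2, f, x => by
        have e1 : x = ![x 0, x 1] := by ext i; fin_cases i <;> rfl
        have e2 : g ∘ x = ![g (x 0), g (x 1)] := by ext i; fin_cases i <;> rfl
        rw [e2]
        conv_lhs => rw [e1]
        exact hm _ _
    | 1, f, _ => PEmpty.elim f
    | (_ + 3), f, _ => PEmpty.elim f
  map_rel' := fun {_} r _ => PEmpty.elim r

/-- An operation takes equal values under two homomorphisms that agree on the argument. -/
theorem hom_eq {K : Set (Alg Lmon)} {f : PartialFunOn K 1} (hop : IsOperationOn f)
    (A B : Alg Lmon) (hA : A ∈ K) (hB : B ∈ K) (g h : A.carrier →[Lmon] B.carrier)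
    (a b : A.carrier) (hab : b ∈ f A hA ![a]) (hgh : g a = h a) : g b = h b := by
  have h1 := hop A B hA hB g _ _ hab
  have h2 := hop A B hA hB h _ _ hab
  have e : (fun i => g ((![a] : Fin 1 → A.carrier) i)) =
      fun i => h ((![a] : Fin 1 → A.carrier) i) := by
    funext i
    fin_cases i
    exact hgh
  rw [e] at h1
  exact Part.mem_unique h1 h2

/-- The semidirect product of a monoid `M` with the right `M`-module of functions `M → ℤ`. -/
def SemiExt (M : Type) : Type := M × (M → ℤ)

instance (M : Type) [Monoid M] : Monoid (SemiExt M) where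
  mul := fun p q => (p.1 * q.1, fun v => p.2 (q.1 * v) + q.2 v)
  one := (1, fun _ => 0)
  mul_assoc := fun p q r => by
    refine Prod.ext (mul_assoc p.1 q.1 r.1) (funext fun v => ?_)
    change (p.2 (q.1 * (r.1 * v)) + q.2 (r.1 * v)) + r.2 v =
      p.2 ((q.1 * r.1) * v) + (q.2 (r.1 * v) + r.2 v)
    rw [mul_assoc, add_assoc]
  mul_one := fun p => by
    refine Prod.ext (mul_one p.1) (funext fun v => ?_)
    change p.2 (1 * v) + 0 = p.2 v
    simp
  one_mul := fun p => by
    refine Prod.ext (one_mul p.1) (funext fun v => ?_)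
    change 0 + p.2 v = p.2 v
    simp

/-- The noncommutative case, pointwise. -/
theorem exists_pow_mon {f : PartialFunOn MonCl 1} (hop : IsOperationOn f)
    (A : Alg Lmon) (hA : A ∈ MonCl) (a b : A.carrier) (hab : b ∈ f A hA ![a]) :
    ∃ l r : ℕ, mmul (mpow a l) b = mpow a r := by
  classical
  simp only [mpow_eq A hA]
  letI := monoidOf A hA
  change ∃ l r : ℕ, a ^ l * b = a ^ r
  let W : A.carrier → Prop := fun q => ∃ l r : ℕ, a ^ l * q = a ^ r
  let F : A.carrier → ℤ := fun q => if W q then 1 else 0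
  have hW : ∀ q, W (a * q) ↔ W q := by
    intro q
    constructor
    · rintro ⟨l, r, h⟩
      exact ⟨l + 1, r, by rw [pow_succ, mul_assoc, h]⟩
    · rintro ⟨l, r, h⟩
      refine ⟨l, r + 1, ?_⟩
      rw [← mul_assoc, ← pow_succ, pow_succ', mul_assoc, h, ← pow_succ']
  have hF : ∀ q, F (a * q) = F q := fun q => by simp only [F, hW]
  let B := algOfMonoid (SemiExt A.carrier)
  let g : A.carrier →[Lmon] B.carrier :=
    homOf (fun p => ((p, fun _ => 0) : A.carrier × (A.carrier → ℤ))) rfl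
      (fun p q => Prod.ext rfl (funext fun v => by
        change (0 : ℤ) = 0 + 0
        simp))
  let h : A.carrier →[Lmon] B.carrier :=
    homOf (fun p => ((p, fun v => F v - F (p * v)) : A.carrier × (A.carrier → ℤ)))
      (Prod.ext rfl (funext fun v => by
        change F v - F (1 * v) = 0
        simp))
      (fun p q => Prod.ext rfl (funext fun v => by
        change F v - F ((p * q) * v) = (F (q * v) - F (p * (q * v))) + (F v - F (q * v))
        rw [mul_assoc]; ring))
  have key : g b = h b := by
    refine hom_eq hop A B hA (algOfMonoid_mem _) g h a b hab ?_
    refine Prod.ext rfl (funext fun v => ?_)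
    change (0 : ℤ) = F v - F (a * v)
    rw [hF]; simp
  have key2 : (0 : ℤ) = F 1 - F (b * 1) := congrFun (congrArg Prod.snd key) 1
  have hW1 : W 1 := ⟨0, 0, by simp⟩
  rw [mul_one] at key2
  by_contra hb
  have hWb : ¬ W b := hb
  simp [F, hW1, hWb] at key2

/-- The congruence on `M × M` (with `M` commutative) presenting the tensor square of the
localization of `M` at `a` over the group generated by `a`. -/
def powCon (M : Type) [CommMonoid M] (a : M) : Con (M × M) where
  r := fun p q => ∃ i j k l : ℕ, i + k = j + l ∧ a ^ i * p.1 = a ^ j * q.1 ∧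
    a ^ k * p.2 = a ^ l * q.2
  iseqv :=
    { refl := fun p => ⟨0, 0, 0, 0, rfl, rfl, rfl⟩
      symm := by
        rintro p q ⟨i, j, k, l, h, h1, h2⟩
        exact ⟨j, i, l, k, h.symm, h1.symm, h2.symm⟩
      trans := by
        rintro p q s ⟨i, j, k, l, h, h1, h2⟩ ⟨i', j', k', l', h', h1', h2'⟩
        refine ⟨i' + i, j + j', k' + k, l + l', by omega, ?_, ?_⟩
        · rw [pow_add, mul_assoc, h1, mul_left_comm, h1', pow_add, mul_assoc]
        · rw [pow_add, mul_assoc, h2, mul_left_comm, h2', pow_add, mul_assoc] }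
  mul' := by
    rintro p q s t ⟨i, j, k, l, h, h1, h2⟩ ⟨i', j', k', l', h', h1', h2'⟩
    refine ⟨i + i', j + j', k + k', l + l', by omega, ?_, ?_⟩
    · rw [pow_add, pow_add, Prod.fst_mul, Prod.fst_mul, mul_mul_mul_comm, h1, h1',
        mul_mul_mul_comm]
    · rw [pow_add, pow_add, Prod.snd_mul, Prod.snd_mul, mul_mul_mul_comm, h2, h2',
        mul_mul_mul_comm]

/-- The commutative case, pointwise. -/
theorem exists_pow_comm {f : PartialFunOn CommMonCl 1} (hop : IsOperationOn f)
    (A : Alg Lmon) (hA : A ∈ CommMonCl) (a b : A.carrier) (hab : b ∈ f A hA ![a]) :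
    ∃ l r : ℕ, mmul (mpow a l) b = mpow a r := by
  simp only [mpow_eq A hA.1]
  letI := commMonoidOf A hA
  change ∃ l r : ℕ, a ^ l * b = a ^ r
  let c := powCon A.carrier a
  let B := algOfMonoid c.Quotient
  let g0 : A.carrier →* c.Quotient := c.mk'.comp (MonoidHom.inl _ _)
  let h0 : A.carrier →* c.Quotient := c.mk'.comp (MonoidHom.inr _ _)
  let g : A.carrier →[Lmon] B.carrier := homOf g0 (map_one g0) (map_mul g0)
  let h : A.carrier →[Lmon] B.carrier := homOf h0 (map_one h0) (map_mul h0)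
  have key : g b = h b := by
    refine hom_eq hop A B hA (algOfMonoid_mem_comm _) g h a b hab ?_
    change ((a, 1) : A.carrier × A.carrier) = (((1, a) : A.carrier × A.carrier) : c.Quotient)
    exact c.eq.2 ⟨0, 1, 1, 0, rfl, by simp, by simp⟩
  have key2 : (((b, 1) : A.carrier × A.carrier) : c.Quotient) =
    ((1, b) : A.carrier × A.carrier) := key
  obtain ⟨i, j, k, l, -, h1, -⟩ := c.eq.1 key2
  exact ⟨i, j, by simpa using h1⟩

/-- Realization of terms in products is componentwise. -/
theorem realize_pi {ι : Type u} (A : ι → Alg L) {β : Type v} (t : L.Term β)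
    (x : β → (Alg.pi A).carrier) (i : ι) :
    t.realize x i = t.realize (fun b => x b i) := by
  induction t with
  | var => rfl
  | func f ts ih =>
    change Structure.funMap f (fun j => (ts j).realize x i) =
      Structure.funMap f (fun j => (ts j).realize fun b => x b i)
    congr 1
    funext j
    exact ih j

theorem conjEq_pi {ι : Type u} (A : ι → Alg L) {α : Type v} {k : ℕ}
    {φ : L.BoundedFormula α k} (hφ : IsConjEq φ) (x : α → (Alg.pi A).carrier)
    (y : Fin k → (Alg.pi A).carrier)
    (h : ∀ i, φ.Realize (fun b => x b i) (fun j => y j i)) : φ.Realize x y := by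
  induction hφ with
  | top => simp
  | equal t₁ t₂ =>
    change t₁.realize (Sum.elim x y) = t₂.realize (Sum.elim x y)
    funext i
    rw [realize_pi, realize_pi]
    have e : (fun b => Sum.elim x y b i) = Sum.elim (fun b => x b i) (fun j => y j i) := by
      funext b
      cases b <;> rfl
    rw [e]
    exact h i
  | inf _ _ ih1 ih2 =>
    rw [BoundedFormula.realize_inf]
    exact ⟨ih1 fun i => (BoundedFormula.realize_inf.1 (h i)).1,
      ih2 fun i => (BoundedFormula.realize_inf.1 (h i)).2⟩

theorem pp_pi {ι : Type u} (A : ι → Alg L) {α : Type v} {k : ℕ}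
    {φ : L.BoundedFormula α k} (hφ : IsPP φ) (x : α → (Alg.pi A).carrier)
    (y : Fin k → (Alg.pi A).carrier)
    (h : ∀ i, φ.Realize (fun b => x b i) (fun j => y j i)) : φ.Realize x y := by
  induction hφ with
  | of_conjEq hc => exact conjEq_pi A hc x y h
  | ex _ ih =>
    rw [BoundedFormula.realize_ex]
    have h' := fun i => BoundedFormula.realize_ex.1 (h i)
    choose z hz using h'
    refine ⟨z, ih _ fun i => ?_⟩
    convert hz i using 1
    funext j
    refine Fin.lastCases ?_ (fun j => ?_) j
    · rw [Fin.snoc_last]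
      exact congrFun (Fin.snoc_last (α := fun _ => (Alg.pi A).carrier) z y) i
    · rw [Fin.snoc_castSucc]
      exact congrFun (Fin.snoc_castSucc (α := fun _ => (Alg.pi A).carrier) z y j) i

theorem mmul_pi {ι : Type} (A : ι → Alg Lmon) (a b : (Alg.pi A).carrier) (i : ι) :
    (mmul a b : (Alg.pi A).carrier) i = mmul (a i) (b i) := by
  change Structure.funMap mulSym (fun j => (![a, b] : Fin 2 → (Alg.pi A).carrier) j i) =
    Structure.funMap mulSym ![a i, b i]
  congr 1
  funext j
  fin_cases j <;> rfl

theorem mone_pi {ι : Type} (A : ι → Alg Lmon) (i : ι) :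
    (mone : (Alg.pi A).carrier) i = mone := by
  change Structure.funMap oneSym _ = Structure.funMap oneSym _
  congr 1
  exact Subsingleton.elim _ _

theorem mpow_pi {ι : Type} (A : ι → Alg Lmon) (a : (Alg.pi A).carrier) (k : ℕ) (i : ι) :
    (mpow a k : (Alg.pi A).carrier) i = mpow (a i) k := by
  induction k with
  | zero => exact mone_pi A i
  | succ k ih =>
    change (mmul (mpow a k) a : (Alg.pi A).carrier) i = mmul (mpow (a i) k) (a i)
    rw [mmul_pi, ih]

theorem monCl_pi {ι : Type} (A : ι → Alg Lmon) (h : ∀ i, A i ∈ MonCl) : Alg.pi A ∈ MonCl := by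
  refine ⟨fun a b c => funext fun i => ?_, fun a => funext fun i => ?_,
    fun a => funext fun i => ?_⟩
  · simp only [mmul_pi]; exact (h i).1 _ _ _
  · simp only [mmul_pi, mone_pi]; exact (h i).2.1 _
  · simp only [mmul_pi, mone_pi]; exact (h i).2.2 _

theorem commMonCl_pi {ι : Type} (A : ι → Alg Lmon) (h : ∀ i, A i ∈ CommMonCl) :
    Alg.pi A ∈ CommMonCl := by
  refine ⟨monCl_pi A fun i => (h i).1, fun a b => funext fun i => ?_⟩
  simp only [mmul_pi]; exact (h i).2 _ _

/-- Let `K` be either the variety of monoids or the variety of commutative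
monoids. For every unary implicit operation `f` of `K` defined by a primitive positive formula
there exist `l, r ∈ ℕ` such that `aˡ · f(a) = aʳ` for all `A ∈ K` and `a ∈ dom (f^A)`. -/
theorem statement_18 (K : Set (Alg Lmon)) (hK : K = MonCl ∨ K = CommMonCl)
    (f : PartialFunOn K 1) (φ : Lmon.Formula (Fin 2)) (hpp : IsPP φ)
    (hdef : DefinedBy f φ) (hop : IsOperationOn f) :
    ∃ l r : ℕ, ∀ (A : Alg Lmon) (hA : A ∈ K) (a b : A.carrier),
      b ∈ f A hA ![a] → mmul (mpow a l) b = mpow a r := by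
  have hpt : ∀ (A : Alg Lmon) (hA : A ∈ K) (a b : A.carrier), b ∈ f A hA ![a] →
      ∃ l r : ℕ, mmul (mpow a l) b = mpow a r := by
    rcases hK with rfl | rfl
    · exact exists_pow_mon hop
    · exact exists_pow_comm hop
  have hpi : ∀ (A : ℕ × ℕ → Alg Lmon), (∀ i, A i ∈ K) → Alg.pi A ∈ K := by
    rcases hK with rfl | rfl
    · exact monCl_pi
    · exact commMonCl_pi
  by_contra hcon
  push Not at hcon
  choose A hA a b hb hne using fun p : ℕ × ℕ => hcon p.1 p.2
  have hφ : φ.Realize (Fin.snoc (![a] : Fin 1 → (Alg.pi A).carrier) b :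
      Fin 2 → (Alg.pi A).carrier) := by
    refine pp_pi A hpp _ _ fun i => ?_
    have h1 := (hdef _ (hA i) _ _).1 (hb i)
    unfold Formula.Realize at h1
    convert h1 using 1
    funext j
    fin_cases j <;> rfl
  have hmem := (hdef _ (hpi A hA) _ _).2 hφ
  obtain ⟨l, r, h⟩ := hpt _ _ _ _ hmem
  apply hne (l, r)
  have h1 := congrFun h (l, r)
  have h2 := mmul_pi A (mpow (M := (Alg.pi A).carrier) a l) b (l, r)
  have h3 := congrArg (fun c => mmul c (b (l, r))) (mpow_pi A a l (l, r))
  exact h3.symm.trans <| h2.symm.trans (h1.trans (mpow_pi A a r (l, r)))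

end Impl
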